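/- Let 0 ≤ ν ≤ 1 and d > 1 + ν be reals, let M > 0, μ > 0, ε > 0, let N̄ ≥ −1 be an integer, and set t = (1 − (1+ν)/d)·(2/(1+3ν)). Then ∑_{n=−1}^{N̄} 4·2^{(3+5ν)/(1+3ν)}·( M·(5·2^n·ε/μ)^{(1+ν)/d} / (2^n·ε) )^{2/(1+3ν)} < 4·2^{(3+5ν)/(1+3ν)}·( M·(5/μ)^{(1+ν)/d} / ε^{1−(1+ν)/d} )^{2/(1+3ν)} · min{ 4^t/(2^t − 1), N̄ + 5 }. -/

import Mathlib

/-!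
Write `α = (1 + ν) / d ∈ (0, 1)`, `p = 2 / (1 + 3ν) ∈ (0, 2]` and `q = 2 ^ t`. The powers of `2 ^ n`
in the `n`-th summand combine to `(2 ^ n) ^ ((α - 1) p) = q ^ (-n)`, so the left-hand side is the
constant prefactor times the geometric sum `q + 1 + q⁻¹ + ⋯ + q ^ (-N)` (`summand_eq`).

Since `0 < t < 2`, we have `1 < q < 4`. The geometric sum equals `(q ^ 2 - q ^ (-N)) / (q - 1)`,
which is less than `q ^ 2 / (q - 1)`; also, its first term is less than `4` and each of the other
`N + 1` terms is at most `1`, so it is less than `N + 5`.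
-/

lemma sum_Icc_neg_one_succ (f : ℤ → ℝ) {m : ℤ} (hm : -1 ≤ m) :
    ∑ n ∈ Finset.Icc (-1 : ℤ) (m + 1), f n = ∑ n ∈ Finset.Icc (-1 : ℤ) m, f n + f (m + 1) := by
  have h : Finset.Icc (-1 : ℤ) (m + 1) = insert (m + 1) (Finset.Icc (-1 : ℤ) m) := by
    ext x
    simp only [Finset.mem_insert, Finset.mem_Icc]
    omega
  rw [h, Finset.sum_insert (by simp), add_comm]

lemma zpow_geom_sum_mul {q : ℝ} (hq : 0 < q) {N : ℤ} (hN : -1 ≤ N) :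
    (∑ n ∈ Finset.Icc (-1 : ℤ) N, q ^ (-n)) * (q - 1) = q ^ 2 - q ^ (-N) := by
  induction N, hN using Int.leInduction with
  | base => simp; ring
  | succ m hm ih =>
    rw [sum_Icc_neg_one_succ _ hm, add_mul, ih]
    have h : q ^ (-m) = q ^ (-(m + 1)) * q := by
      rw [← zpow_add_one₀ hq.ne']
      congr 1
      ring
    rw [h]
    ring

lemma zpow_geom_sum_le {q : ℝ} (hq : 1 ≤ q) {N : ℤ} (hN : -1 ≤ N) :
    ∑ n ∈ Finset.Icc (-1 : ℤ) N, q ^ (-n) ≤ q + (N + 1) := by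
  induction N, hN using Int.leInduction with
  | base => simp
  | succ m hm ih =>
    rw [sum_Icc_neg_one_succ _ hm]
    have h : q ^ (-(m + 1)) ≤ 1 := zpow_le_one_of_nonpos₀ hq (by omega)
    push_cast
    linarith

/-- Each summand is its value at `n = 0`, with the powers of `ε` collected, times
`(2 ^ t) ^ (-n)` for `t = (1 - α) p`. -/
lemma summand_eq {M μ ε : ℝ} (α p : ℝ) (hM : 0 < M) (hμ : 0 < μ) (hε : 0 < ε) (n : ℤ) :
    (M * (5 * (2 : ℝ) ^ n * ε / μ) ^ α / ((2 : ℝ) ^ n * ε)) ^ p =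
      (M * (5 / μ) ^ α / ε ^ (1 - α)) ^ p * ((2 : ℝ) ^ ((1 - α) * p)) ^ (-n) := by
  have h2 : (0 : ℝ) < 2 ^ n := by positivity
  have hbase : M * (5 * (2 : ℝ) ^ n * ε / μ) ^ α / ((2 : ℝ) ^ n * ε) =
      M * (5 / μ) ^ α / ε ^ (1 - α) * ((2 : ℝ) ^ n) ^ (α - 1) := by
    rw [show 5 * (2 : ℝ) ^ n * ε / μ = 5 / μ * (2 ^ n * ε) by ring,
      Real.mul_rpow (by positivity) (by positivity), Real.mul_rpow h2.le hε.le,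
      Real.rpow_sub hε, Real.rpow_sub h2, Real.rpow_one, Real.rpow_one]
    field_simp
  have hpow : (((2 : ℝ) ^ n) ^ (α - 1)) ^ p = ((2 : ℝ) ^ ((1 - α) * p)) ^ (-n) := by
    rw [← Real.rpow_mul h2.le, ← Real.rpow_intCast, ← Real.rpow_intCast,
      ← Real.rpow_mul zero_le_two, ← Real.rpow_mul zero_le_two]
    congr 1
    push_cast
    ring
  rw [hbase, Real.mul_rpow (by positivity) (by positivity), hpow]

/-- Corollary 6.2, `d > 1 + ν` case, for Nesterov's universal fast gradient method:
with `t = (1 − (1+ν)/d)·(2/(1+3ν))`,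
`∑_{n=−1}^{N̄} 4·2^{(3+5ν)/(1+3ν)}·(M·(5·2ⁿε/μ)^{(1+ν)/d}/(2ⁿε))^{2/(1+3ν)}
  < 4·2^{(3+5ν)/(1+3ν)}·(M·(5/μ)^{(1+ν)/d}/ε^{1−(1+ν)/d})^{2/(1+3ν)}·min{4ᵗ/(2ᵗ−1), N̄+5}`. -/
theorem restart_univ_bound (ν d M μ ε t : ℝ) (hν0 : 0 ≤ ν) (hν1 : ν ≤ 1)
    (hd : 1 + ν < d) (hM : 0 < M) (hμ : 0 < μ) (hε : 0 < ε)
    (ht : t = (1 - (1 + ν) / d) * (2 / (1 + 3 * ν)))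
    (N : ℤ) (hN : -1 ≤ N) :
    ∑ n ∈ Finset.Icc (-1 : ℤ) N,
        4 * (2 : ℝ) ^ ((3 + 5 * ν) / (1 + 3 * ν)) *
          (M * (5 * (2 : ℝ) ^ n * ε / μ) ^ ((1 + ν) / d) / ((2 : ℝ) ^ n * ε)) ^
            (2 / (1 + 3 * ν)) <
      4 * (2 : ℝ) ^ ((3 + 5 * ν) / (1 + 3 * ν)) *
          (M * (5 / μ) ^ ((1 + ν) / d) / ε ^ (1 - (1 + ν) / d)) ^ (2 / (1 + 3 * ν)) *
        min ((4 : ℝ) ^ t / ((2 : ℝ) ^ t - 1)) ((N : ℝ) + 5) := by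
  have hα0 : 0 < (1 + ν) / d := div_pos (by linarith) (by linarith)
  have hα1 : (1 + ν) / d < 1 := (div_lt_one (by linarith)).2 hd
  have hp0 : 0 < 2 / (1 + 3 * ν) := by positivity
  have hp2 : 2 / (1 + 3 * ν) ≤ 2 := div_le_self (by norm_num) (by linarith)
  have ht0 : 0 < t := ht ▸ mul_pos (by linarith) hp0
  have ht2 : t < 2 := by
    rw [ht]
    nlinarith [mul_pos hα0 hp0]
  have hq1 : 1 < (2 : ℝ) ^ t := Real.one_lt_rpow (by norm_num) ht0
  have hq4 : (2 : ℝ) ^ t < 4 := by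
    have h := Real.rpow_lt_rpow_of_exponent_lt (by norm_num : (1 : ℝ) < 2) ht2
    norm_num at h
    exact h
  have hsq : (4 : ℝ) ^ t = ((2 : ℝ) ^ t) ^ 2 := by
    rw [show (4 : ℝ) = 2 * 2 by norm_num, Real.mul_rpow (by norm_num) (by norm_num), sq]
  simp_rw [summand_eq _ _ hM hμ hε, ← ht, ← mul_assoc]
  rw [← Finset.mul_sum]
  refine mul_lt_mul_of_pos_left (lt_min ?_ ?_) (by positivity)
  · rw [lt_div_iff₀ (by linarith), zpow_geom_sum_mul (by linarith) hN, hsq]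
    have h : 0 < ((2 : ℝ) ^ t) ^ (-N) := by positivity
    linarith
  · have h := zpow_geom_sum_le hq1.le hN
    linarith
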